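/- Let R be a commutative ring, A, B ∈ GL_n(R), and 1 ≤ k ≤ n. Then every k × k minor of AB is a sum of 2k × 2k minors of the block-diagonal matrix diag(A, B) ∈ GL_{2n}(R). -/

import Mathlib

/-- Expansion of a minor of a product by multilinearity in the rows. -/
theorem Matrix.det_submatrix_mul_eq_sum {R ι κ : Type*} [CommRing R] [Fintype ι] [Fintype κ]
    [DecidableEq κ] {α β : Type*} (A : Matrix α ι R) (B : Matrix ι β R) (r : κ → α) (c : κ → β) :
    ((A * B).submatrix r c).det =
      ∑ f : κ → ι, (∏ i, A (r i) (f i)) * (B.submatrix f c).det := by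
  classical
  have h : (A * B).submatrix r c = fun i => ∑ j, A (r i) j • fun l => B j (c l) := by
    ext i l
    simp [Matrix.mul_apply]
  rw [h]
  refine (Matrix.detRowAlternating.toMultilinearMap.map_sum
    (fun i j => A (r i) j • fun l => B j (c l))).trans (Finset.sum_congr rfl fun f _ => ?_)
  exact Matrix.detRowAlternating.toMultilinearMap.map_smul_univ
    (fun i => A (r i) (f i)) (fun i l => B (f i) (c l))

/-- The Cauchy–Binet formula, summed over the strictly increasing maps into the inner index. -/
theorem Matrix.det_submatrix_mul {R ι : Type*} [CommRing R] [Fintype ι] [LinearOrder ι] {k : ℕ}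
    {α β : Type*} (A : Matrix α ι R) (B : Matrix ι β R) (r : Fin k → α) (c : Fin k → β)
    [Fintype {e : Fin k → ι // StrictMono e}] :
    ((A * B).submatrix r c).det =
      ∑ e : {e : Fin k → ι // StrictMono e},
        (A.submatrix r e.1).det * (B.submatrix e.1 c).det := by
  classical
  have hsplit (e : {e : Fin k → ι // StrictMono e}) :
      (A.submatrix r e.1).det * (B.submatrix e.1 c).det =
        ∑ σ : Equiv.Perm (Fin k),
          (∏ i, A (r i) (e.1 (σ i))) * (B.submatrix (e.1 ∘ σ) c).det := by
    rw [← Matrix.det_transpose (A.submatrix r e.1), Matrix.det_apply', Finset.sum_mul]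
    refine Finset.sum_congr rfl fun σ _ => ?_
    have hσ : (B.submatrix (e.1 ∘ σ) c).det = (σ.sign : R) * (B.submatrix e.1 c).det :=
      Matrix.det_permute σ (B.submatrix e.1 c)
    simp only [hσ, Matrix.transpose_apply, Matrix.submatrix_apply]
    ring
  rw [Matrix.det_submatrix_mul_eq_sum, Finset.sum_congr rfl fun e _ => hsplit e,
    ← Fintype.sum_prod_type']
  symm
  refine Finset.sum_of_injOn (fun p => p.1.1 ∘ p.2) ?_ (by simp) ?_ (by simp)
  · rintro ⟨⟨e, he⟩, σ⟩ - ⟨⟨e', he'⟩, τ⟩ - (h : e ∘ σ = e' ∘ τ)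
    have hr : Set.range e = Set.range e' := by
      rw [← σ.surjective.range_comp e, h, τ.surjective.range_comp]
    obtain rfl := (he.range_inj he').1 hr
    obtain rfl : σ = τ := Equiv.ext fun i => he.injective (congrFun h i)
    rfl
  · intro f _ hf
    have hinj : ¬ Function.Injective f := fun hinj => hf
      ⟨(⟨f ∘ Tuple.sort f, (Tuple.monotone_sort f).strictMono_of_injective
        (hinj.comp (Tuple.sort f).injective)⟩, (Tuple.sort f)⁻¹), by simp, by ext i; simp⟩
    obtain ⟨i, j, hij, hne⟩ : ∃ i j, f i = f j ∧ i ≠ j := by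
      simpa [Function.Injective] using hinj
    rw [Matrix.det_zero_of_row_eq hne (by ext l; simp [hij]), mul_zero]

/-- A product of two `k × k` minors is a `2k × 2k` minor of the block-diagonal matrix. -/
theorem Matrix.det_fromBlocks_submatrix_sumMap {R α β γ δ : Type*} [CommRing R] {k : ℕ}
    (A : Matrix α β R) (B : Matrix γ δ R)
    (r : Fin k → α) (s : Fin k → β) (t : Fin k → γ) (c : Fin k → δ)
    (φ : Fin (2 * k) ≃ Fin k ⊕ Fin k) :
    ((Matrix.fromBlocks A 0 0 B).submatrix (Sum.map r t ∘ φ) (Sum.map s c ∘ φ)).det =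
      (A.submatrix r s).det * (B.submatrix t c).det := by
  rw [← Matrix.submatrix_submatrix, Matrix.det_submatrix_equiv_self,
    ← Matrix.det_fromBlocks_zero₁₂ _ 0]
  congr 1
  ext (i | i) (j | j) <;> rfl

/-- Every `k × k` minor of `A * B` (for `A, B ∈ GL_n(R)`) is a sum of `2k × 2k` minors of
the block-diagonal matrix `diag(A, B) ∈ GL_{2n}(R)`. -/
theorem stmt1 {R : Type*} [CommRing R] {n k : ℕ} (hn : 1 ≤ n) (hk : 1 ≤ k) (hkn : k ≤ n)
    (A B : Matrix (Fin n) (Fin n) R) (hA : IsUnit A.det) (hB : IsUnit B.det)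
    (r c : Fin k → Fin n) :
    ∃ (m : ℕ) (ρ γ : Fin m → (Fin (2 * k) → (Fin n ⊕ Fin n))),
      ((A * B).submatrix r c).det =
        ∑ i : Fin m, ((Matrix.fromBlocks A 0 0 B).submatrix (ρ i) (γ i)).det := by
  classical
  let φ : Fin (2 * k) ≃ Fin k ⊕ Fin k := (finCongr (two_mul k)).trans finSumFinEquiv.symm
  let ε := Fintype.equivFin {e : Fin k → Fin n // StrictMono e}
  refine ⟨_, fun i => Sum.map r (ε.symm i).1 ∘ φ, fun i => Sum.map (ε.symm i).1 c ∘ φ, ?_⟩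
  simp_rw [Matrix.det_fromBlocks_submatrix_sumMap]
  rw [Matrix.det_submatrix_mul]
  exact (ε.symm.sum_comp fun e => (A.submatrix r e.1).det * (B.submatrix e.1 c).det).symm
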